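/- Let J, R, Q ∈ M_m(ℝ) with J = −Jᵀ, R = Rᵀ positive definite, Q = Qᵀ positive definite, and let B ∈ ℝ^{m×n}. Set A = (J − R)Q and C = BᵀQ and D = 0. If (A,B) is controllable and (A,C) is observable, then the transfer matrix G(s) = C(sI − A)⁻¹B is strictly positive real. -/

import Mathlib

/-!
The quadratic form `xᵀQx` is a strict storage function: as `J` is skew, `QA + AᵀQ = -2 QRQ`, and
`QRQ` is positive definite. Choose `ε > 0` with `QRQ - εQ ⪰ 0` (`exists_sub_smul_posSemidef`).
For `Re s > 0` put `F = sI - (A + εI)` and `K = QF`. Then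
`K + K* = 2 Re(s) Q + 2 (QRQ - εQ)` is positive definite, so `K`, and hence `F`, is invertible, and
`K⁻¹ + K⁻* = K⁻* (K + K*) K⁻¹ ⪰ 0` (`posSemidef_inv_add_conjTranspose`). Because `C = BᵀQ` and
`F⁻¹ = K⁻¹ Q`, the shifted transfer matrix is `G(s - ε) = (QB)* K⁻¹ (QB)`, and its Hermitian part,
a congruence transform of that of `K⁻¹`, is positive semidefinite.
-/

open Matrix
open scoped ComplexOrder

open Matrix
open scoped ComplexOrder

/-- Kalman controllability matrix `[B, AB, …, A^{m−1}B]`. -/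
noncomputable def kalmanMatrix {m n : ℕ} (A : Matrix (Fin m) (Fin m) ℝ)
    (B : Matrix (Fin m) (Fin n) ℝ) : Matrix (Fin m) (Fin m × Fin n) ℝ :=
  Matrix.of fun i p => (A ^ (p.1 : ℕ) * B) i p.2

/-- `(A, B)` is controllable if the Kalman matrix has full rank `m`. -/
noncomputable def Controllable {m n : ℕ} (A : Matrix (Fin m) (Fin m) ℝ)
    (B : Matrix (Fin m) (Fin n) ℝ) : Prop := (kalmanMatrix A B).rank = m

/-- `(A, C)` is observable if `(Aᵀ, Cᵀ)` is controllable. -/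
noncomputable def Observable {m n : ℕ} (A : Matrix (Fin m) (Fin m) ℝ)
    (C : Matrix (Fin n) (Fin m) ℝ) : Prop := Controllable Aᵀ Cᵀ

/-- Transfer matrix `G(s) = C (sI − A)⁻¹ B + D` (entrywise complexification). -/
noncomputable def transferFn {m n : ℕ} (A : Matrix (Fin m) (Fin m) ℝ)
    (B : Matrix (Fin m) (Fin n) ℝ) (C : Matrix (Fin n) (Fin m) ℝ)
    (D : Matrix (Fin n) (Fin n) ℝ) (s : ℂ) : Matrix (Fin n) (Fin n) ℂ :=
  C.map Complex.ofReal * (s • (1 : Matrix (Fin m) (Fin m) ℂ) - A.map Complex.ofReal)⁻¹ *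
    B.map Complex.ofReal + D.map Complex.ofReal

/-- The transfer matrix of `(A,B,C,D)` is positive real: no poles in the open
right half plane (there `sI − A` is invertible) and `G(s) + G(s̄)ᵀ ⪰ 0` for all
`s` with `Re s > 0`. -/
noncomputable def IsPR {m n : ℕ} (A : Matrix (Fin m) (Fin m) ℝ)
    (B : Matrix (Fin m) (Fin n) ℝ) (C : Matrix (Fin n) (Fin m) ℝ)
    (D : Matrix (Fin n) (Fin n) ℝ) : Prop :=
  ∀ s : ℂ, 0 < s.re →
    IsUnit (s • (1 : Matrix (Fin m) (Fin m) ℂ) - A.map Complex.ofReal).det ∧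
    (transferFn A B C D s + (transferFn A B C D ((starRingEnd ℂ) s))ᵀ).PosSemidef

/-- Strictly positive real: there is `ε > 0` such that `s ↦ G(s − ε)` is PR;
since `G(s − ε) = C (sI − (A + εI))⁻¹ B + D`, this is `IsPR (A + ε•I) B C D`. -/
noncomputable def IsSPR {m n : ℕ} (A : Matrix (Fin m) (Fin m) ℝ)
    (B : Matrix (Fin m) (Fin n) ℝ) (C : Matrix (Fin n) (Fin m) ℝ)
    (D : Matrix (Fin n) (Fin n) ℝ) : Prop :=
  ∃ ε : ℝ, 0 < ε ∧ IsPR (A + ε • (1 : Matrix (Fin m) (Fin m) ℝ)) B C D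

theorem exists_sub_smul_one_posSemidef {m : ℕ} {M : Matrix (Fin m) (Fin m) ℝ}
    (hM : M.IsHermitian) {c : ℝ} (hc : ∀ i, c ≤ hM.eigenvalues i) :
    (M - c • (1 : Matrix (Fin m) (Fin m) ℝ)).PosSemidef := by
  have key : M - c • (1 : Matrix (Fin m) (Fin m) ℝ) =
      (hM.eigenvectorUnitary : Matrix (Fin m) (Fin m) ℝ) *
        diagonal (fun i => hM.eigenvalues i - c) *
        (hM.eigenvectorUnitary : Matrix (Fin m) (Fin m) ℝ)ᴴ := by
    have h := hM.spectral_theorem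
    rw [Unitary.conjStarAlgAut_apply] at h
    have hd : diagonal (fun i => hM.eigenvalues i - c) =
        diagonal (RCLike.ofReal ∘ hM.eigenvalues) - c • (1 : Matrix (Fin m) (Fin m) ℝ) := by
      rw [smul_one_eq_diagonal, diagonal_sub]
      rfl
    have hu : (hM.eigenvectorUnitary : Matrix (Fin m) (Fin m) ℝ) *
        (hM.eigenvectorUnitary : Matrix (Fin m) (Fin m) ℝ)ᴴ = 1 :=
      Unitary.coe_mul_star_self _
    rw [hd, mul_sub, sub_mul, mul_smul_comm, smul_mul_assoc, mul_one, hu]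
    congr 1
  rw [key]
  exact (PosSemidef.diagonal fun i => sub_nonneg.2 (hc i)).mul_mul_conjTranspose_same _

/-- A positive definite matrix dominates a small positive multiple of any symmetric matrix; this
produces the margin `ε` in strict positive realness. -/
theorem exists_sub_smul_posSemidef {m : ℕ} {W Q : Matrix (Fin m) (Fin m) ℝ}
    (hW : W.PosDef) (hQ : Q.IsHermitian) :
    ∃ ε : ℝ, 0 < ε ∧ (W - ε • Q).PosSemidef := by
  rcases isEmpty_or_nonempty (Fin m) with he | hne
  · exact ⟨1, one_pos, by
      rw [Subsingleton.elim (W - (1 : ℝ) • Q) 0]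
      exact PosSemidef.zero⟩
  obtain ⟨i, hi⟩ := Finite.exists_min hW.1.eigenvalues
  obtain ⟨j, hj⟩ := Finite.exists_min hQ.neg.eigenvalues
  have h1 := exists_sub_smul_one_posSemidef hW.1 hi
  have h2 := exists_sub_smul_one_posSemidef hQ.neg hj
  have hw : 0 < hW.1.eigenvalues i := hW.eigenvalues_pos i
  generalize hW.1.eigenvalues i = w at *
  generalize hQ.neg.eigenvalues j = c at *
  -- `W ≥ w I` and `-Q ≥ c I` give `W - ε Q ≥ (w + ε c) I`, and `ε |c| ≤ w` for this `ε`.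
  have hε : 0 < w / (|c| + 1) := by positivity
  refine ⟨w / (|c| + 1), hε, ?_⟩
  have h3 : 0 ≤ w + w / (|c| + 1) * c := by
    have : w = w / (|c| + 1) * (|c| + 1) := by field_simp
    nlinarith [neg_abs_le c]
  have := (h1.add (h2.smul hε.le)).add
    ((PosSemidef.one (n := Fin m) (R := ℝ)).smul h3)
  convert this using 1
  module

theorem map_ofReal_conjTranspose {m n : ℕ} (M : Matrix (Fin m) (Fin n) ℝ) :
    (M.map Complex.ofReal)ᴴ = Mᵀ.map Complex.ofReal := by
  ext i j
  simp

theorem map_ofReal_mul {l m n : ℕ} (M : Matrix (Fin l) (Fin m) ℝ) (N : Matrix (Fin m) (Fin n) ℝ) :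
    (M * N).map Complex.ofReal = M.map Complex.ofReal * N.map Complex.ofReal :=
  Matrix.map_mul (f := Complex.ofRealHom)

/-- Complexification preserves positive semidefiniteness: a real spectral decomposition `U D Uᵀ`
becomes a complex congruence of the same nonnegative diagonal matrix. -/
theorem posSemidef_map_ofReal {m : ℕ} {M : Matrix (Fin m) (Fin m) ℝ} (hM : M.PosSemidef) :
    (M.map Complex.ofReal).PosSemidef := by
  have key : M.map Complex.ofReal =
      (hM.1.eigenvectorUnitary : Matrix (Fin m) (Fin m) ℝ).map Complex.ofReal *
        diagonal (fun i => (hM.1.eigenvalues i : ℂ)) *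
        ((hM.1.eigenvectorUnitary : Matrix (Fin m) (Fin m) ℝ).map Complex.ofReal)ᴴ := by
    have h := hM.1.spectral_theorem
    rw [Unitary.conjStarAlgAut_apply] at h
    conv_lhs => rw [h]
    rw [map_ofReal_conjTranspose, map_ofReal_mul, map_ofReal_mul,
      diagonal_map Complex.ofReal_zero]
    rfl
  rw [key]
  refine (PosSemidef.diagonal fun i => ?_).mul_mul_conjTranspose_same _
  exact Complex.zero_le_real.2 (hM.eigenvalues_nonneg i)

theorem posDef_map_ofReal {m : ℕ} {M : Matrix (Fin m) (Fin m) ℝ} (hM : M.PosDef) :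
    (M.map Complex.ofReal).PosDef :=
  (posSemidef_map_ofReal hM.posSemidef).posDef_iff_isUnit.2
    (hM.isUnit.map Complex.ofRealHom.mapMatrix)

/-- If `K v = 0` then `v* (K + K*) v = 0`, so a matrix with positive definite Hermitian part is
invertible. -/
theorem isUnit_of_posDef_add_conjTranspose {m : ℕ} {K : Matrix (Fin m) (Fin m) ℂ}
    (hK : (K + Kᴴ).PosDef) : IsUnit K.det := by
  rw [isUnit_iff_ne_zero]
  intro h0
  obtain ⟨v, hv, hKv⟩ := exists_mulVec_eq_zero_iff.2 h0
  have h := hK.dotProduct_mulVec_pos hv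
  have h2 : star v ⬝ᵥ (Kᴴ *ᵥ v) = 0 := by
    rw [dotProduct_mulVec, ← star_mulVec, hKv, star_zero, zero_dotProduct]
  rw [add_mulVec, dotProduct_add, h2, hKv, dotProduct_zero, add_zero] at h
  exact h.false

/-- The identity `K⁻¹ + K⁻* = K⁻* (K + K*) K⁻¹` transfers positivity of the Hermitian part to the
inverse. -/
theorem posSemidef_inv_add_conjTranspose {m : ℕ} {K : Matrix (Fin m) (Fin m) ℂ}
    (hK : (K + Kᴴ).PosDef) : (K⁻¹ + K⁻¹ᴴ).PosSemidef := by
  have hu := isUnit_of_posDef_add_conjTranspose hK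
  have h := hK.posSemidef.conjTranspose_mul_mul_same K⁻¹
  have h1 : K⁻¹ᴴ * Kᴴ = 1 := by
    rw [← conjTranspose_mul, mul_nonsing_inv _ hu, conjTranspose_one]
  rwa [mul_add, add_mul, h1, mul_assoc, mul_nonsing_inv _ hu, mul_one, one_mul, add_comm] at h

/-- Since the system matrices are real, `G(s̄)ᵀ = G(s)*`. -/
theorem transferFn_conj_transpose {m n : ℕ} (A : Matrix (Fin m) (Fin m) ℝ)
    (B : Matrix (Fin m) (Fin n) ℝ) (C : Matrix (Fin n) (Fin m) ℝ)
    (D : Matrix (Fin n) (Fin n) ℝ) (s : ℂ) :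
    (transferFn A B C D ((starRingEnd ℂ) s))ᵀ = (transferFn A B C D s)ᴴ := by
  unfold transferFn
  simp only [transpose_add, transpose_mul, conjTranspose_add, conjTranspose_mul,
    transpose_nonsing_inv, conjTranspose_nonsing_inv, transpose_sub, conjTranspose_sub,
    transpose_smul, conjTranspose_smul, transpose_one, conjTranspose_one,
    map_ofReal_conjTranspose, transpose_map, starRingEnd_apply]

/-- a port-Hamiltonian system `A = (J − R)Q`, `C = BᵀQ`, `D = 0`
with `J = −Jᵀ`, `R = Rᵀ ≻ 0`, `Q = Qᵀ ≻ 0` that is controllable and observable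
has a strictly positive real transfer matrix `G(s) = C(sI − A)⁻¹B`. -/
theorem portHamiltonian_isSPR {m n : ℕ}
    (J R Q : Matrix (Fin m) (Fin m) ℝ) (B : Matrix (Fin m) (Fin n) ℝ)
    (A : Matrix (Fin m) (Fin m) ℝ) (C : Matrix (Fin n) (Fin m) ℝ)
    (hJ : J = -Jᵀ) (hR : R.PosDef) (hQ : Q.PosDef)
    (hA : A = (J - R) * Q) (hC : C = Bᵀ * Q)
    (hctrb : Controllable A B) (hobs : Observable A C) :
    IsSPR A B C 0 := by
  have hQt : Qᵀ = Q := by simpa [IsHermitian, conjTranspose_eq_transpose_of_trivial] using hQ.1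
  have hRt : Rᵀ = R := by simpa [IsHermitian, conjTranspose_eq_transpose_of_trivial] using hR.1
  have hJt : Jᵀ = -J := by rw [eq_neg_iff_add_eq_zero, add_comm]; exact eq_neg_iff_add_eq_zero.1 hJ
  have hW : (Q * R * Q).PosDef := by
    have := hR.conjTranspose_mul_mul_same (B := Q) (mulVec_injective_iff_isUnit.2 hQ.isUnit)
    rwa [hQ.1.eq] at this
  obtain ⟨ε, hε, hM⟩ := exists_sub_smul_posSemidef hW hQ.1
  refine ⟨ε, hε, fun s hs => ?_⟩
  set N : Matrix (Fin m) (Fin m) ℝ := Q * (A + ε • 1) with hN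
  -- The dissipation (Lyapunov) identity `QA + AᵀQ = -2 QRQ`, shifted by `ε`.
  have hNN : N + Nᵀ = -((2 : ℝ) • (Q * R * Q - ε • Q)) := by
    simp only [hN, hA, mul_add, sub_mul, mul_sub, mul_smul_comm, mul_one, transpose_add,
      transpose_sub, transpose_mul, transpose_smul, hQt, hRt, hJt, neg_mul, mul_neg, mul_assoc]
    module
  set F : Matrix (Fin m) (Fin m) ℂ :=
    s • (1 : Matrix (Fin m) (Fin m) ℂ) - (A + ε • (1 : Matrix (Fin m) (Fin m) ℝ)).map Complex.ofReal
    with hF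
  set Qc : Matrix (Fin m) (Fin m) ℂ := Q.map Complex.ofReal with hQc
  have hQcD : Qc.PosDef := posDef_map_ofReal hQ
  have hK : Qc * F = s • Qc - N.map Complex.ofReal := by
    have : N.map Complex.ofReal =
        Qc * (A + ε • (1 : Matrix (Fin m) (Fin m) ℝ)).map Complex.ofReal :=
      map_ofReal_mul _ _
    rw [this, hF, mul_sub, mul_smul_comm, mul_one]
  have hKD : (Qc * F + (Qc * F)ᴴ).PosDef := by
    have h1 : (0 : ℂ) < ((2 * s.re : ℝ) : ℂ) := Complex.zero_lt_real.2 (by positivity)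
    have h2 := (hQcD.smul h1).add_posSemidef
      ((posSemidef_map_ofReal hM).smul (zero_le_two (α := ℂ)))
    convert h2 using 1
    rw [hK, conjTranspose_sub, conjTranspose_smul, hQcD.1.eq, map_ofReal_conjTranspose]
    ext i j
    have h3 := congrArg (Complex.ofReal) (congrFun (congrFun hNN i) j)
    have h4 : s + star s = ((2 * s.re : ℝ) : ℂ) := Complex.add_conj s
    simp only [Matrix.add_apply, Matrix.sub_apply, Matrix.neg_apply, Matrix.smul_apply, map_apply, smul_eq_mul, ← h4,
      transpose_apply, Complex.ofReal_add, Complex.ofReal_sub, Complex.ofReal_neg, Complex.ofReal_mul,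
      Complex.ofReal_ofNat] at h3 ⊢
    linear_combination -h3
  have hKu := isUnit_of_posDef_add_conjTranspose hKD
  have hQu : IsUnit Qc.det := (isUnit_iff_isUnit_det _).1 hQcD.isUnit
  have hFu : IsUnit F.det := by
    rw [det_mul] at hKu
    exact isUnit_of_mul_isUnit_right hKu
  refine ⟨hFu, ?_⟩
  rw [transferFn_conj_transpose]
  -- `C = BᵀQ` supplies the left factor `Q`, and `F⁻¹ = K⁻¹ Q` with `K = QF` the right one, so that
  -- `G(s - ε)` is a congruence transform of `K⁻¹`.
  have hFi : F⁻¹ = (Qc * F)⁻¹ * Qc := by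
    rw [Matrix.mul_inv_rev, mul_assoc, nonsing_inv_mul _ hQu, mul_one]
  have hG : transferFn (A + ε • (1 : Matrix (Fin m) (Fin m) ℝ)) B C 0 s =
      (Qc * B.map Complex.ofReal)ᴴ * (Qc * F)⁻¹ * (Qc * B.map Complex.ofReal) := by
    have hCc : C.map Complex.ofReal = (Qc * B.map Complex.ofReal)ᴴ := by
      rw [conjTranspose_mul, hQcD.1.eq, map_ofReal_conjTranspose, hC]
      exact map_ofReal_mul _ _
    rw [transferFn, ← hF, hFi, hCc, Matrix.map_zero _ Complex.ofReal_zero, add_zero]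
    simp only [Matrix.mul_assoc]
  have := (posSemidef_inv_add_conjTranspose hKD).conjTranspose_mul_mul_same
    (Qc * B.map Complex.ofReal)
  rw [hG]
  convert this using 1
  rw [Matrix.mul_add, Matrix.add_mul]
  congr 1
  rw [conjTranspose_mul, conjTranspose_mul _ (Qc * F)⁻¹, conjTranspose_conjTranspose,
    Matrix.mul_assoc]
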